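/- Let λ be a nonzero complex number, k ≥ 1 a natural number, E^k the k-fold iterate of the complex exponential, and P a nonconstant polynomial over ℂ. Define f(z) = λ·(E^k(z) + P(z)). Then for every unbounded curve γ, i.e., every continuous map γ : [0,∞) → ℂ whose image is unbounded, the image of f ∘ γ is unbounded. -/

import Mathlib

/-!
Write `w_j = exp^[j]`, `k = m + 1`, `d = natDegree P`, `a = leadingCoeff P`, and suppose that
`exp (w_m z) + P z` stays bounded on the image `Γ` of the curve. All limits are taken along the
filter `curveInfty γ`, that is, as `z → ∞` within `Γ`.

The curve enters only through `eventually_abs_im_le`: if `h` is continuous and `exp (h z)` stays in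
an open half-plane bounded by a line through `0` for all large `z ∈ Γ`, then `Im (h z)` is bounded
for all large `z ∈ Γ`. Indeed each large point of the curve is joined, inside the part of `Γ` where
the half-plane condition holds, to a point on a fixed circle, and along the way `Im h` cannot vary
by more than `π`.

Since `exp (w_m z) ~ -a z ^ d`, we get `Re w_m → +∞`, and `Re w_m = o(|z|)`. Descending,
`Re w_j → +∞` for all `j ≤ m`, and, as `exp w_j = w_{j+1}` lies in the right half-plane, `Im w_j` is
bounded for `j < m`. Ascending again gives `|w_j| ≥ |z| - O(1)` for `j ≤ m`, so that
`|Im w_m| → ∞`.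

On the other hand `z ^ 2 / |z| ^ 2` converges to some `ε = ±1`: if `m = 0` then `Re z = o(|z|)` and
`ε = -1`, and if `m ≥ 1` then `Im z` is bounded and `ε = 1`. Hence
`exp (2 w_m) / |z| ^ (2 d) → a ^ 2 ε ^ d ≠ 0`, so `exp (2 w_m)` stays in a half-plane and `Im w_m` is
bounded, a contradiction. Squaring makes the two directions `± i` possible for `m = 0` agree.
-/

open Filter Topology Bornology

/-! ### Infinity within a curve -/

/-- The filter of neighbourhoods of infinity within the image of the curve `γ` on `[0, ∞)`. -/
noncomputable def curveInfty (γ : ℝ → ℂ) : Filter ℂ := cobounded ℂ ⊓ 𝓟 (γ '' Set.Ici 0)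

lemma curveInfty_neBot {γ : ℝ → ℂ} (hub : ¬ IsBounded (γ '' Set.Ici 0)) :
    (curveInfty γ).NeBot := by
  rw [curveInfty, ← Filter.frequently_mem_iff_neBot]
  intro h
  apply hub
  rw [isBounded_def]
  exact h

lemma tendsto_norm_curveInfty (γ : ℝ → ℂ) : Tendsto (fun z : ℂ => ‖z‖) (curveInfty γ) atTop :=
  tendsto_norm_cobounded_atTop.mono_left inf_le_left

lemma exists_radius_of_eventually {γ : ℝ → ℂ} {p : ℂ → Prop} (h : ∀ᶠ z in curveInfty γ, p z) :
    ∃ R : ℝ, ∀ t, 0 ≤ t → R ≤ ‖γ t‖ → p (γ t) := by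
  rw [curveInfty, eventually_inf_principal] at h
  rw [← comap_norm_atTop, eventually_comap] at h
  obtain ⟨R, hR⟩ := eventually_atTop.1 h
  exact ⟨R, fun t ht hRt => hR _ hRt _ rfl ⟨t, ht, rfl⟩⟩

/-! ### Logarithms of paths in a half-plane -/

/-- Every interval of length more than `π` contains a zero of the cosine. -/
lemma exists_cos_eq_zero {x y : ℝ} (h : x + Real.pi < y) : ∃ u ∈ Set.Icc x y, Real.cos u = 0 := by
  have hpi := Real.pi_pos
  refine ⟨Real.pi / 2 + ⌈(x - Real.pi / 2) / Real.pi⌉ * Real.pi, ⟨?_, ?_⟩, ?_⟩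
  · have := Int.le_ceil ((x - Real.pi / 2) / Real.pi)
    rw [div_le_iff₀ hpi] at this
    linarith
  · have := Int.ceil_lt_add_one ((x - Real.pi / 2) / Real.pi)
    rw [← sub_lt_iff_lt_add, lt_div_iff₀ hpi] at this
    linarith
  · rw [Real.cos_eq_zero_iff]
    exact ⟨⌈(x - Real.pi / 2) / Real.pi⌉, by ring⟩

/-- A continuous logarithm of a path in an open half-plane has imaginary part varying by at
most `π`. -/
lemma abs_im_sub_le {g : ℝ → ℂ} {s t : ℝ} (hst : s ≤ t) (hg : ContinuousOn g (Set.Icc s t)) {c : ℂ}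
    (h : ∀ u ∈ Set.Icc s t, 0 < (c * Complex.exp (g u)).re) :
    |(g t).im - (g s).im| ≤ Real.pi := by
  by_contra! hlt
  have hc : c ≠ 0 := by
    rintro rfl
    simpa using h s ⟨le_rfl, hst⟩
  -- Adding `log c` to `g` reduces to the case `c = 1`.
  set v : ℝ → ℝ := fun u => (Complex.log c + g u).im with hv
  have hvc : ContinuousOn v (Set.uIcc s t) := by
    rw [Set.uIcc_of_le hst]
    exact Complex.continuous_im.comp_continuousOn (continuousOn_const.add hg)
  have hcos : ∀ u ∈ Set.Icc s t, Real.cos (v u) ≠ 0 := by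
    intro u hu h0
    have := h u hu
    have e : c * Complex.exp (g u) = Complex.exp (Complex.log c + g u) := by
      rw [Complex.exp_add, Complex.exp_log hc]
    rw [e, Complex.exp_re] at this
    simp only [hv] at h0
    rw [h0, mul_zero] at this
    exact lt_irrefl _ this
  have hz : ∃ y ∈ Set.uIcc (v s) (v t), Real.cos y = 0 := by
    have e : v t - v s = (g t).im - (g s).im := by simp [hv]
    rw [← e] at hlt
    rcases lt_abs.1 hlt with h1 | h1
    · rw [Set.uIcc_of_le (by linarith [Real.pi_pos])]
      exact exists_cos_eq_zero (by linarith)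
    · rw [Set.uIcc_of_ge (by linarith [Real.pi_pos])]
      exact exists_cos_eq_zero (by linarith)
  obtain ⟨y, hy, hy0⟩ := hz
  obtain ⟨u, hu, rfl⟩ := intermediate_value_uIcc hvc hy
  rw [Set.uIcc_of_le hst] at hu
  exact hcos u hu hy0

/-- A path from inside a circle to outside of it has a last crossing with that circle. -/
lemma exists_last_crossing {n : ℝ → ℝ} (hn : ContinuousOn n (Set.Ici 0)) {R t : ℝ} (ht : 0 ≤ t)
    (h0 : n 0 ≤ R) (hR : R ≤ n t) :
    ∃ s, 0 ≤ s ∧ s ≤ t ∧ n s = R ∧ ∀ u ∈ Set.Icc s t, R ≤ n u := by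
  have hn' : ContinuousOn n (Set.Icc 0 t) := hn.mono Set.Icc_subset_Ici_self
  have hcl : IsClosed (Set.Icc 0 t ∩ n ⁻¹' {R}) :=
    hn'.preimage_isClosed_of_isClosed isClosed_Icc isClosed_singleton
  have hcp : IsCompact (Set.Icc 0 t ∩ n ⁻¹' {R}) :=
    isCompact_Icc.of_isClosed_subset hcl Set.inter_subset_left
  have hne : (Set.Icc 0 t ∩ n ⁻¹' {R}).Nonempty := by
    obtain ⟨u, hu, hu'⟩ := intermediate_value_Icc ht hn' ⟨h0, hR⟩
    exact ⟨u, hu, hu'⟩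
  obtain ⟨s, ⟨⟨hs0, hst⟩, hsR⟩, hmax⟩ := hcp.exists_isGreatest hne
  refine ⟨s, hs0, hst, hsR, ?_⟩
  rintro u ⟨hsu, hut⟩
  by_contra! hlt
  obtain ⟨v, ⟨hv1, hv2⟩, hv⟩ := intermediate_value_Icc hut
    (hn'.mono (Set.Icc_subset_Icc_left (hs0.trans hsu))) ⟨hlt.le, hR⟩
  have hvs : v ≤ s := hmax ⟨⟨hs0.trans (hsu.trans hv1), hv2⟩, hv⟩
  have huv : u = v := le_antisymm hv1 (hvs.trans hsu)
  rw [huv, hv] at hlt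
  exact lt_irrefl _ hlt

/-- If `exp ∘ h` maps the far part of the curve into an open half-plane, then `Im h` is bounded on
the far part of the curve. -/
lemma eventually_abs_im_le {γ : ℝ → ℂ} (hγ : ContinuousOn γ (Set.Ici 0)) {h : ℂ → ℂ}
    (hh : Continuous h) {c : ℂ} (hc : ∀ᶠ z in curveInfty γ, 0 < (c * Complex.exp (h z)).re) :
    ∃ B : ℝ, ∀ᶠ z in curveInfty γ, |(h z).im| ≤ B := by
  obtain ⟨R₀, hR₀⟩ := exists_radius_of_eventually hc
  set R := max R₀ ‖γ 0‖
  obtain ⟨C, hC⟩ := (isCompact_closedBall (0 : ℂ) R).exists_bound_of_continuousOn hh.continuousOn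
  refine ⟨C + Real.pi, ?_⟩
  have hmem : ∀ᶠ z in curveInfty γ, z ∈ γ '' Set.Ici 0 := mem_inf_of_right (mem_principal_self _)
  filter_upwards [(tendsto_norm_curveInfty γ).eventually_ge_atTop R, hmem]
  rintro _ hR ⟨t, ht, rfl⟩
  obtain ⟨s, hs0, hst, hsR, hu⟩ :=
    exists_last_crossing hγ.norm (R := R) ht (le_max_right _ _) hR
  have key := abs_im_sub_le (g := fun u => h (γ u)) hst
    (hh.comp_continuousOn (hγ.mono fun u hu => hs0.trans hu.1))
    (fun u hu' => hR₀ u (hs0.trans hu'.1) ((le_max_left _ _).trans (hu u hu')))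
  have h1 : ‖h (γ s)‖ ≤ C := hC _ (by simp [hsR])
  have h2 := Complex.abs_im_le_norm (h (γ s))
  have h3 := abs_sub_abs_le_abs_sub (h (γ t)).im (h (γ s)).im
  linarith

/-! ### Growth of the iterates along the curve -/

lemma tendsto_re_of_norm_exp {l : Filter ℂ} {w : ℂ → ℂ}
    (h : Tendsto (fun z => ‖Complex.exp (w z)‖) l atTop) :
    Tendsto (fun z => (w z).re) l atTop := by
  simp only [Complex.norm_exp] at h
  simpa [Function.comp_def] using Real.tendsto_log_atTop.comp h

lemma tendsto_norm_of_tendsto_re {l : Filter ℂ} {w : ℂ → ℂ}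
    (h : Tendsto (fun z => (w z).re) l atTop) : Tendsto (fun z => ‖w z‖) l atTop :=
  tendsto_atTop_mono (fun z => Complex.re_le_norm (w z)) h

lemma continuous_exp_iterate (j : ℕ) : Continuous (Complex.exp^[j]) :=
  Complex.continuous_exp.iterate j

lemma tendsto_re_iterate {l : Filter ℂ} {m : ℕ}
    (h : Tendsto (fun z => (Complex.exp^[m] z).re) l atTop) {j : ℕ} (hj : j ≤ m) :
    Tendsto (fun z => (Complex.exp^[j] z).re) l atTop := by
  induction hj using Nat.decreasingInduction with
  | self => exact h
  | of_succ j _ ih =>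
    simp only [Function.iterate_succ_apply'] at ih
    exact tendsto_re_of_norm_exp (tendsto_norm_of_tendsto_re ih)

lemma im_iterate_bounded {γ : ℝ → ℂ} (hγ : ContinuousOn γ (Set.Ici 0)) {m : ℕ}
    (h : Tendsto (fun z => (Complex.exp^[m] z).re) (curveInfty γ) atTop) {j : ℕ} (hj : j < m) :
    ∃ B : ℝ, ∀ᶠ z in curveInfty γ, |(Complex.exp^[j] z).im| ≤ B := by
  refine eventually_abs_im_le hγ (continuous_exp_iterate j) (c := 1) ?_
  filter_upwards [(tendsto_re_iterate h (Nat.succ_le_of_lt hj)).eventually_gt_atTop 0] with z hz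
  rwa [one_mul, ← Function.iterate_succ_apply' Complex.exp]

/-- The intermediate iterates `exp^[j]` have bounded imaginary part, so they grow at least like
`‖z‖` by `exp x ≥ x + 1`. -/
lemma norm_iterate_ge {γ : ℝ → ℂ} (hγ : ContinuousOn γ (Set.Ici 0)) {m : ℕ}
    (h : Tendsto (fun z => (Complex.exp^[m] z).re) (curveInfty γ) atTop) {j : ℕ} (hj : j ≤ m) :
    ∃ C : ℝ, ∀ᶠ z in curveInfty γ, ‖z‖ - C ≤ ‖Complex.exp^[j] z‖ := by
  induction j with
  | zero => exact ⟨0, by simp⟩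
  | succ j ih =>
    obtain ⟨C, hC⟩ := ih (by omega)
    obtain ⟨B, hB⟩ := im_iterate_bounded hγ h (j := j) (by omega)
    refine ⟨C + B, ?_⟩
    filter_upwards [hC, hB, (tendsto_re_iterate h (j := j) (by omega)).eventually_gt_atTop 0]
      with z h1 h2 h3
    rw [Function.iterate_succ_apply', Complex.norm_exp]
    have h4 := Real.add_one_le_exp (Complex.exp^[j] z).re
    have h5 := Complex.norm_le_abs_re_add_abs_im (Complex.exp^[j] z)
    rw [abs_of_pos h3] at h5
    linarith

/-! ### Asymptotic directions -/

lemma tendsto_eval_div_pow (P : Polynomial ℂ) :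
    Tendsto (fun z => P.eval z / z ^ P.natDegree) (cobounded ℂ) (𝓝 P.leadingCoeff) := by
  have h : Tendsto (fun z : ℂ => P.leadingCoeff * z ^ P.natDegree / z ^ P.natDegree) (cobounded ℂ)
      (𝓝 P.leadingCoeff) := by
    refine tendsto_const_nhds.congr' ?_
    filter_upwards [eventually_ne_cobounded (0 : ℂ)] with z hz
    field_simp
  exact (P.isEquivalent_cobounded_leading_monomial.div
    (Asymptotics.IsEquivalent.refl (u := fun z : ℂ => z ^ P.natDegree))).symm.tendsto_nhds h

/-- If `exp (w z) / z ^ d` converges and `Re w → +∞`, then `Re w = O(log ‖z‖) = o(‖z‖)`. -/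
lemma tendsto_re_div_norm {l : Filter ℂ} (hl : Tendsto (fun z : ℂ => ‖z‖) l atTop) {w : ℂ → ℂ}
    {d : ℕ} {b : ℂ} (h : Tendsto (fun z => Complex.exp (w z) / z ^ d) l (𝓝 b))
    (hre : Tendsto (fun z => (w z).re) l atTop) :
    Tendsto (fun z => (w z).re / ‖z‖) l (𝓝 0) := by
  have hup : Tendsto (fun z : ℂ => Real.log (‖b‖ + 1) / ‖z‖ + d * (Real.log ‖z‖ / ‖z‖)) l
      (𝓝 (0 + d * 0)) := by
    refine (tendsto_const_nhds.div_atTop hl).add (Tendsto.const_mul _ ?_)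
    exact Real.isLittleO_log_id_atTop.tendsto_div_nhds_zero.comp hl
  rw [mul_zero, add_zero] at hup
  refine tendsto_of_tendsto_of_tendsto_of_le_of_le' tendsto_const_nhds hup ?_ ?_
  · filter_upwards [hre.eventually_ge_atTop 0] with z hz
    positivity
  · filter_upwards [h.norm.eventually_lt_const (lt_add_one ‖b‖), hl.eventually_gt_atTop 0]
      with z h1 h2
    rw [norm_div, norm_pow, div_lt_iff₀ (by positivity), Complex.norm_exp] at h1
    have h3 := Real.log_le_log (Real.exp_pos _) h1.le
    rw [Real.log_exp, Real.log_mul (by positivity) (by positivity), Real.log_pow] at h3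
    rw [← mul_div_assoc, ← add_div]
    gcongr

/-- If `Re z = o(‖z‖)` then `z ^ 2` is asymptotically in direction `-1`. -/
lemma tendsto_sq_div_of_re {l : Filter ℂ} (hl : Tendsto (fun z : ℂ => ‖z‖) l atTop)
    (h : Tendsto (fun z : ℂ => z.re / ‖z‖) l (𝓝 0)) :
    Tendsto (fun z : ℂ => z ^ 2 / (‖z‖ : ℂ) ^ 2) l (𝓝 (-1)) := by
  rw [tendsto_iff_norm_sub_tendsto_zero]
  have h2 := (h.abs).const_mul 2
  rw [abs_zero, mul_zero] at h2
  refine h2.congr' ?_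
  filter_upwards [hl.eventually_gt_atTop 0] with z hz
  have hz' : (‖z‖ : ℂ) ≠ 0 := by exact_mod_cast hz.ne'
  have e : z ^ 2 / (‖z‖ : ℂ) ^ 2 - -1 = z * (2 * z.re : ℝ) / (‖z‖ : ℂ) ^ 2 := by
    rw [sub_neg_eq_add, div_add_one (pow_ne_zero 2 hz'), ← Complex.mul_conj', ← Complex.add_conj]
    ring
  rw [e, norm_div, norm_mul, norm_pow, Complex.norm_real, Complex.norm_real, norm_norm,
    Real.norm_eq_abs, abs_mul, abs_two, abs_div, abs_norm]
  field_simp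

/-- If `Im z` is bounded then `z ^ 2` is asymptotically in direction `1`. -/
lemma tendsto_sq_div_of_im {l : Filter ℂ} (hl : Tendsto (fun z : ℂ => ‖z‖) l atTop)
    {B : ℝ} (h : ∀ᶠ z : ℂ in l, |z.im| ≤ B) :
    Tendsto (fun z : ℂ => z ^ 2 / (‖z‖ : ℂ) ^ 2) l (𝓝 1) := by
  rw [tendsto_iff_norm_sub_tendsto_zero]
  have h2 : Tendsto (fun z : ℂ => 2 * B / ‖z‖) l (𝓝 0) := tendsto_const_nhds.div_atTop hl
  refine squeeze_zero' (Eventually.of_forall fun _ => norm_nonneg _) ?_ h2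
  filter_upwards [hl.eventually_gt_atTop 0, h] with z hz hB
  have hz' : (‖z‖ : ℂ) ≠ 0 := by exact_mod_cast hz.ne'
  have e : z ^ 2 / (‖z‖ : ℂ) ^ 2 - 1 = z * ((2 * z.im : ℝ) * Complex.I) / (‖z‖ : ℂ) ^ 2 := by
    rw [div_sub_one (pow_ne_zero 2 hz'), ← Complex.mul_conj', ← Complex.sub_conj]
    ring
  rw [e, norm_div, norm_mul, norm_mul, norm_pow, Complex.norm_real, Complex.norm_real, norm_norm,
    Complex.norm_I, mul_one, Real.norm_eq_abs, abs_mul, abs_two]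
  calc ‖z‖ * (2 * |z.im|) / ‖z‖ ^ 2 = 2 * |z.im| / ‖z‖ := by field_simp
    _ ≤ 2 * B / ‖z‖ := by gcongr

/-! ### Contradiction from a bounded image -/

/-- `exp^[m + 1] + P` is unbounded on every unbounded curve. -/
lemma not_bounded_exp_iterate_add {m : ℕ} {P : Polynomial ℂ} (hP : 1 ≤ P.natDegree) {γ : ℝ → ℂ}
    (hγ : ContinuousOn γ (Set.Ici 0)) (hub : ¬ IsBounded (γ '' Set.Ici 0)) (M : ℝ)
    (hM : ∀ t, 0 ≤ t → ‖Complex.exp^[m + 1] (γ t) + P.eval (γ t)‖ ≤ M) : False := by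
  have hne := curveInfty_neBot hub
  have hl := tendsto_norm_curveInfty γ
  set d := P.natDegree with hd
  set a := P.leadingCoeff with ha
  have ha0 : a ≠ 0 := by
    rw [ha, Polynomial.leadingCoeff_ne_zero]
    rintro rfl
    simp at hd
    omega
  have hMem : ∀ᶠ z in curveInfty γ, ‖Complex.exp^[m + 1] z + P.eval z‖ ≤ M := by
    have hmem : ∀ᶠ z in curveInfty γ, z ∈ γ '' Set.Ici 0 := mem_inf_of_right (mem_principal_self _)
    filter_upwards [hmem]
    rintro _ ⟨t, ht, rfl⟩
    exact hM t ht
  have hpow : Tendsto (fun z : ℂ => ‖z‖ ^ d) (curveInfty γ) atTop :=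
    (tendsto_pow_atTop (by omega)).comp hl
  have hquot : Tendsto (fun z => Complex.exp (Complex.exp^[m] z) / z ^ d) (curveInfty γ)
      (𝓝 (-a)) := by
    have h1 : Tendsto (fun z => (Complex.exp^[m + 1] z + P.eval z) / z ^ d) (curveInfty γ)
        (𝓝 0) := by
      refine squeeze_zero_norm' ?_ (tendsto_const_nhds (x := M).div_atTop hpow)
      filter_upwards [hMem] with z hz
      rw [norm_div, norm_pow]
      gcongr
    have h2 := h1.sub ((tendsto_eval_div_pow P).mono_left (inf_le_left : curveInfty γ ≤ _))
    rw [zero_sub] at h2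
    refine h2.congr fun z => ?_
    rw [Function.iterate_succ_apply', ← hd]
    ring
  have hre : Tendsto (fun z => (Complex.exp^[m] z).re) (curveInfty γ) atTop := by
    apply tendsto_re_of_norm_exp
    have h1 := Tendsto.pos_mul_atTop (norm_pos_iff.2 (neg_ne_zero.2 ha0)) hquot.norm hpow
    refine h1.congr' ?_
    filter_upwards [hl.eventually_gt_atTop 0] with z hz
    rw [norm_div, norm_pow]
    field_simp
  have hsmall := tendsto_re_div_norm hl hquot hre
  obtain ⟨ε, hε0, hε⟩ : ∃ ε : ℂ, ε ≠ 0 ∧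
      Tendsto (fun z : ℂ => z ^ 2 / (‖z‖ : ℂ) ^ 2) (curveInfty γ) (𝓝 ε) := by
    rcases Nat.eq_zero_or_pos m with rfl | hm
    · exact ⟨-1, by simp, tendsto_sq_div_of_re hl (by simpa using hsmall)⟩
    · obtain ⟨B, hB⟩ := im_iterate_bounded hγ hre hm
      exact ⟨1, by simp, tendsto_sq_div_of_im hl (by simpa using hB)⟩
  set c : ℂ := (-a) ^ 2 * ε ^ d with hc
  have hc0 : c ≠ 0 := mul_ne_zero (pow_ne_zero _ (neg_ne_zero.2 ha0)) (pow_ne_zero _ hε0)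
  have hdir : Tendsto (fun z => Complex.exp (2 * Complex.exp^[m] z) / ((‖z‖ ^ (2 * d) : ℝ) : ℂ))
      (curveInfty γ) (𝓝 c) := by
    refine ((hquot.pow 2).mul (hε.pow d)).congr' ?_
    filter_upwards [hl.eventually_gt_atTop 0] with z hz
    have hz0 : z ≠ 0 := norm_pos_iff.1 hz
    have hz' : (‖z‖ : ℂ) ≠ 0 := by exact_mod_cast hz.ne'
    rw [two_mul (Complex.exp^[m] z), Complex.exp_add]
    push_cast
    rw [div_pow, div_pow, ← pow_mul, ← pow_mul, ← pow_mul, mul_comm d 2]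
    field_simp
  have hpos : ∀ᶠ z in curveInfty γ,
      0 < ((starRingEnd ℂ) c * Complex.exp (2 * Complex.exp^[m] z)).re := by
    have h1 := (Complex.continuous_re.tendsto _).comp (hdir.const_mul ((starRingEnd ℂ) c))
    have h2 : 0 < ((starRingEnd ℂ) c * c).re := by
      rw [Complex.conj_mul', ← Complex.ofReal_pow, Complex.ofReal_re]
      positivity
    filter_upwards [h1.eventually_const_lt h2, hl.eventually_gt_atTop 0] with z h3 hz
    rw [Function.comp_apply, ← mul_div_assoc, Complex.div_ofReal_re] at h3
    exact (div_pos_iff_of_pos_right (by positivity)).1 h3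
  obtain ⟨B, hB⟩ := eventually_abs_im_le hγ (h := fun z => 2 * Complex.exp^[m] z)
    (continuous_const.mul (continuous_exp_iterate m)) hpos
  obtain ⟨C, hC⟩ := norm_iterate_ge hγ hre le_rfl
  -- `‖z‖ - C ≤ ‖w_m‖ ≤ ‖z‖ / 2 + B / 2` fails for large `‖z‖`.
  obtain ⟨z, h1, h2, h3, h4, h5⟩ := (hB.and <| hC.and <| (hre.eventually_gt_atTop 0).and <|
    (hsmall.eventually_lt_const (by norm_num : (0 : ℝ) < 1 / 2)).and <|
    hl.eventually_gt_atTop (max 0 (2 * C + B))).exists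
  have hz := (le_max_left _ _).trans_lt h5
  have hz' := (le_max_right _ _).trans_lt h5
  rw [div_lt_iff₀ hz] at h4
  have h6 := Complex.norm_le_abs_re_add_abs_im (Complex.exp^[m] z)
  rw [abs_of_pos h3] at h6
  have h7 : (2 * Complex.exp^[m] z).im = 2 * (Complex.exp^[m] z).im := by simp
  rw [h7, abs_mul, abs_two] at h1
  linarith

/-- For `λ ≠ 0`, `k ≥ 1`, and a nonconstant polynomial `P`, the function
`f z = λ (E^k z + P z)` maps every unbounded curve to an unbounded set. -/
theorem scaled_iterated_exp_add_poly_unbounded_on_unbounded_curve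
    (lam : ℂ) (hlam : lam ≠ 0)
    (k : ℕ) (hk : 1 ≤ k)
    (P : Polynomial ℂ) (hP : 1 ≤ P.natDegree)
    (f : ℂ → ℂ) (hf : ∀ z, f z = lam * (Complex.exp^[k] z + P.eval z))
    (γ : ℝ → ℂ) (hγ : ContinuousOn γ (Set.Ici 0))
    (hub : ¬ Bornology.IsBounded (γ '' Set.Ici 0)) :
    ¬ Bornology.IsBounded ((f ∘ γ) '' Set.Ici 0) := by
  intro hb
  obtain ⟨m, rfl⟩ : ∃ m, k = m + 1 := ⟨k - 1, by omega⟩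
  obtain ⟨M, hM⟩ := isBounded_iff_forall_norm_le.1 hb
  refine not_bounded_exp_iterate_add (m := m) hP hγ hub (M / ‖lam‖) fun t ht => ?_
  have h := hM _ ⟨t, ht, rfl⟩
  rw [Function.comp_apply, hf, norm_mul] at h
  rw [le_div_iff₀ (norm_pos_iff.2 hlam)]
  linarith
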